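/- Let k, l be nonzero rational numbers. There exist a positive integer d₁ = d₁(k, l), a nonnegative integer d₂ = d₂(k, l) and a constant B = B(k, l) > 0 such that for all real random variables X and Y with bounded ranges (not necessarily independent) and all n ∈ ℕ, Hₙ(kX + lY) − (Hₙ(X) + Hₙ(Y))/2 ≤ d₁·( Hₙ(X + Y) − (Hₙ(X) + Hₙ(Y))/2 ) + d₂·( Hₙ(X) + Hₙ(Y) − Hₙ(X, Y) ) + B. -/

import Mathlib

open MeasureTheory ProbabilityTheory Real

/-- The dyadic discretization map `D_n(x) = 2^{-n} ⌊2^n x⌋`. -/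
noncomputable def Dn (n : ℕ) (x : ℝ) : ℝ := (⌊(2 : ℝ) ^ n * x⌋ : ℝ) / (2 : ℝ) ^ n

/-- Shannon entropy (base 2) of the discrete random variable `f` under `P`. -/
noncomputable def entOf {Ω : Type*} [MeasurableSpace Ω] {S : Type*}
    (P : Measure Ω) (f : Ω → S) : ℝ :=
  ∑' s : S, -((P (f ⁻¹' {s})).toReal * Real.logb 2 (P (f ⁻¹' {s})).toReal)

/-- `H_n(X)`: entropy of `D_n(X)`. -/
noncomputable def Hn {Ω : Type*} [MeasurableSpace Ω] (P : Measure Ω) (n : ℕ) (X : Ω → ℝ) : ℝ :=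
  entOf P (fun ω => Dn n (X ω))

/-- `H_n(X,Y)`: entropy of `(D_n(X), D_n(Y))`. -/
noncomputable def Hn2 {Ω : Type*} [MeasurableSpace Ω] (P : Measure Ω) (n : ℕ)
    (X Y : Ω → ℝ) : ℝ :=
  entOf P (fun ω => (Dn n (X ω), Dn n (Y ω)))

/-!
Write `A` and `B` for the discretizations of `X` and `Y`, and let `A₀, A₁, A₂` be copies of `A` that
are conditionally independent given `B` and each jointly distributed with `B` as `A` is. Up to
multiples of the mutual information of `A` and `B` they behave like independent copies, so
submodularity yields entropy analogues of sumset inequalities: subtracting `A₁ + B` from `A₀ + B`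
shows that `H(A₀ - A₁)`, and hence `H(A₀ + A₁ - A₂)`, exceeds `H(A)` by a bounded multiple of the
doubling gap `H(A + B) - (H(A) + H(B)) / 2` plus a bounded multiple of the mutual information. Since
`A₀ + (c + 1) A₁ = (A₀ + A₁ - A₂) + (A₂ + c A₁)`, the entropy of `A₀ + c A₁` grows at most linearly
in `|c|`, and `p A + r B` is reached through `p A₀ + r B = (p A₀ - r A₁) + r (A₁ + B)`. For
`k = p / q` and `l = r / q` the discretization of `k X + l Y` is determined by `p A + r B` up to
boundedly many values, which costs a constant.
-/

section FiniteEntropy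

variable {α β S S' S'' R' T' G : Type*} [Fintype α] [Fintype β] {w : α → ℝ}

open scoped Classical in
/-- The law of `f` on the finite space `α` with weights `w`: `fiberMass w f s` is `P(f = s)`. -/
noncomputable def fiberMass (w : α → ℝ) (f : α → S) (s : S) : ℝ := ∑ x with f x = s, w x

/-- The base-2 Shannon entropy of `f` on the finite space `α` with weights `w`, written as the
expectation of `-log₂ P(f = f x)` so that no sum over the values of `f` is needed. -/
noncomputable def finEntropy (w : α → ℝ) (f : α → S) : ℝ :=
  -∑ x, w x * logb 2 (fiberMass w f (f x))

/-- The mutual information of `f` and `g` on the finite space `α` with weights `w`. -/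
noncomputable def mutualInfo (w : α → ℝ) (f : α → S) (g : α → S') : ℝ :=
  finEntropy w f + finEntropy w g - finEntropy w (fun x => (f x, g x))

lemma fiberMass_eq_sum_ite [DecidableEq S] (w : α → ℝ) (f : α → S) (s : S) :
    fiberMass w f s = ∑ x, if f x = s then w x else 0 := by
  rw [fiberMass, Finset.sum_filter]
  congr!

lemma fiberMass_nonneg (hw : ∀ x, 0 ≤ w x) (f : α → S) (s : S) : 0 ≤ fiberMass w f s :=
  Finset.sum_nonneg fun x _ => hw x

lemma le_fiberMass_apply (hw : ∀ x, 0 ≤ w x) (f : α → S) (x : α) : w x ≤ fiberMass w f (f x) := by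
  unfold fiberMass
  exact Finset.single_le_sum (fun y _ => hw y) (by simp)

lemma fiberMass_apply_pos (hw : ∀ x, 0 ≤ w x) (f : α → S) {x : α} (hx : 0 < w x) :
    0 < fiberMass w f (f x) :=
  hx.trans_le (le_fiberMass_apply hw f x)

lemma fiberMass_apply_le_of_factorsThrough (hw : ∀ x, 0 ≤ w x) {f : α → S} {g : α → S'}
    (h : g.FactorsThrough f) (x : α) : fiberMass w f (f x) ≤ fiberMass w g (g x) := by
  unfold fiberMass
  refine Finset.sum_le_sum_of_subset_of_nonneg (fun y hy => ?_) fun y _ _ => hw y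
  simp only [Finset.mem_filter, Finset.mem_univ, true_and] at hy ⊢
  exact h hy

lemma sum_mul_comp_eq_sum_fiberMass (w : α → ℝ) (f : α → S) (g : S → ℝ) (s : Finset S)
    (hs : ∀ x, f x ∈ s) : ∑ x, w x * g (f x) = ∑ c ∈ s, fiberMass w f c * g c := by
  classical
  rw [← Finset.sum_fiberwise_of_maps_to (fun x _ => hs x)]
  refine Finset.sum_congr rfl fun c _ => ?_
  rw [fiberMass, Finset.sum_mul]
  refine Finset.sum_congr (by congr!) fun x hx => ?_
  rw [(Finset.mem_filter.mp hx).2]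

lemma sum_mul_logb_nonpos (hw : w ∈ stdSimplex ℝ α) {r : α → ℝ} (hr : ∀ x, 0 < w x → 0 < r x)
    (h : ∑ x, w x * r x ≤ 1) : ∑ x, w x * logb 2 (r x) ≤ 0 := by
  have hterm (x : α) : w x * log (r x) ≤ w x * r x - w x := by
    rcases (hw.1 x).eq_or_lt with hx | hx
    · simp [← hx]
    · nlinarith [log_le_sub_one_of_pos (hr x hx)]
  have hsum : ∑ x, w x * log (r x) ≤ 0 := by
    calc ∑ x, w x * log (r x) ≤ ∑ x, (w x * r x - w x) := Finset.sum_le_sum fun x _ => hterm x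
      _ ≤ 0 := by rw [Finset.sum_sub_distrib, hw.2]; linarith
  simp only [logb, ← mul_div_assoc, ← Finset.sum_div]
  exact div_nonpos_of_nonpos_of_nonneg hsum (log_nonneg one_le_two)

lemma finEntropy_le_of_factorsThrough (hw : ∀ x, 0 ≤ w x) {f : α → S} {g : α → S'}
    (h : g.FactorsThrough f) : finEntropy w g ≤ finEntropy w f := by
  refine neg_le_neg (Finset.sum_le_sum fun x _ => ?_)
  rcases (hw x).eq_or_lt with hx | hx
  · simp [← hx]
  · exact mul_le_mul_of_nonneg_left (logb_le_logb_of_le one_lt_two (fiberMass_apply_pos hw f hx)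
      (fiberMass_apply_le_of_factorsThrough hw h x)) hx.le

lemma finEntropy_eq_of_identical_law {v : β → ℝ} {f : α → S} {g : β → S}
    (h : ∀ φ : S → ℝ, ∑ y, v y * φ (g y) = ∑ x, w x * φ (f x)) :
    finEntropy v g = finEntropy w f := by
  classical
  have hlaw : fiberMass v g = fiberMass w f := by
    ext s
    simpa [fiberMass_eq_sum_ite] using h fun c => if c = s then 1 else 0
  rw [finEntropy, finEntropy, hlaw, h fun s => logb 2 (fiberMass w f s)]

lemma finEntropy_const (hw : w ∈ stdSimplex ℝ α) (c : S) : finEntropy w (fun _ => c) = 0 := by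
  simp [finEntropy, fiberMass, hw.2]

lemma finEntropy_le_logb_card (hw : w ∈ stdSimplex ℝ α) (f : α → S) (s : Finset S)
    (hs : ∀ x, f x ∈ s) : finEntropy w f ≤ logb 2 s.card := by
  have hmean : ∑ x, w x * ((fiberMass w f (f x))⁻¹ * (s.card : ℝ)⁻¹) ≤ 1 := by
    rw [sum_mul_comp_eq_sum_fiberMass w f (fun c => (fiberMass w f c)⁻¹ * (s.card : ℝ)⁻¹) s hs]
    calc ∑ c ∈ s, fiberMass w f c * ((fiberMass w f c)⁻¹ * (s.card : ℝ)⁻¹)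
        ≤ ∑ _c ∈ s, (s.card : ℝ)⁻¹ := Finset.sum_le_sum fun c _ => by
          rw [← mul_assoc]
          exact mul_le_of_le_one_left (by positivity) mul_inv_le_one
      _ ≤ 1 := by simpa using mul_inv_le_one
  have hcard (x : α) : (0 : ℝ) < s.card := by exact_mod_cast Finset.card_pos.mpr ⟨f x, hs x⟩
  have hgibbs := sum_mul_logb_nonpos hw (fun x hx =>
    mul_pos (inv_pos.mpr (fiberMass_apply_pos hw.1 f hx)) (inv_pos.mpr (hcard x))) hmean
  have hterm (x : α) : w x * logb 2 ((fiberMass w f (f x))⁻¹ * (s.card : ℝ)⁻¹) =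
      -(w x * logb 2 (fiberMass w f (f x))) - w x * logb 2 s.card := by
    rcases (hw.1 x).eq_or_lt with hx | hx
    · simp [← hx]
    · have hf := fiberMass_apply_pos hw.1 f hx
      have hc := hcard x
      rw [logb_mul (by positivity) (by positivity), logb_inv, logb_inv]
      ring
  simp only [hterm, Finset.sum_sub_distrib, Finset.sum_neg_distrib, ← Finset.sum_mul, hw.2]
    at hgibbs
  rw [finEntropy]
  linarith

open scoped Classical in
/-- The conditional law `P(y | f = s)` on the finite space `α` with weights `w`; it vanishes
identically when `f = s` has probability zero. -/
noncomputable def condWeight (w : α → ℝ) (f : α → S) (s : S) (y : α) : ℝ :=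
  if f y = s then w y / fiberMass w f s else 0

lemma condWeight_nonneg (hw : ∀ x, 0 ≤ w x) (f : α → S) (s : S) (y : α) :
    0 ≤ condWeight w f s y := by
  unfold condWeight
  split_ifs
  · exact div_nonneg (hw y) (fiberMass_nonneg hw f s)
  · exact le_rfl

lemma sum_condWeight (w : α → ℝ) (f : α → S) (s : S) :
    ∑ y, condWeight w f s y = fiberMass w f s / fiberMass w f s := by
  simp only [condWeight, ← Finset.sum_filter, ← Finset.sum_div]
  rfl

lemma fiberMass_mul_fiberMass_eq_sum [DecidableEq S] [DecidableEq S'] (w : α → ℝ) (U : α → S)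
    (V : α → S') (u : S) (v : S') : fiberMass w U u * fiberMass w V v =
      ∑ y, ∑ z, if U y = u ∧ V z = v then w y * w z else 0 := by
  simp only [fiberMass_eq_sum_ite, Finset.sum_mul_sum, ite_and, ite_mul, mul_ite, zero_mul,
    mul_zero]
  refine Finset.sum_congr rfl fun y _ => Finset.sum_congr rfl fun z _ => ?_
  split_ifs <;> rfl

lemma sum_fiber_mul_inv_le_condWeight [DecidableEq S'] [DecidableEq S''] (hw : ∀ x, 0 ≤ w x)
    {Z : α → S} {U : α → S'} {V : α → S''} (hU : Z.FactorsThrough U) (hV : Z.FactorsThrough V)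
    (y z : α) :
    (∑ x, if U y = U x ∧ V z = V x then
      w x * (fiberMass w (fun x => (U x, V x)) (U x, V x))⁻¹ * (fiberMass w Z (Z x))⁻¹ *
        (w y * w z) else 0) ≤ w y * condWeight w Z (Z y) z := by
  set q := fiberMass w fun x => (U x, V x)
  have hZ (x : α) (hx : U y = U x ∧ V z = V x) : Z x = Z y ∧ Z z = Z y :=
    ⟨(hU hx.1).symm, (hV hx.2).trans (hU hx.1).symm⟩
  calc _ = q (U y, V z) * (q (U y, V z))⁻¹ * (w y * condWeight w Z (Z y) z) := by
        nth_rw 1 [show q (U y, V z) = _ from fiberMass_eq_sum_ite w _ _]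
        rw [Finset.sum_mul, Finset.sum_mul]
        refine Finset.sum_congr rfl fun x _ => ?_
        by_cases hx : U y = U x ∧ V z = V x
        · rw [if_pos hx, if_pos (by rw [hx.1, hx.2]), condWeight, if_pos (hZ x hx).2, hx.1, hx.2,
            (hZ x hx).1]
          ring
        · rw [if_neg hx, if_neg fun h => hx (by simpa [eq_comm] using h), zero_mul, zero_mul]
    _ ≤ _ := mul_le_of_le_one_left (mul_nonneg (hw y) (condWeight_nonneg hw Z _ z)) mul_inv_le_one

/-- The ratio is the density, with respect to the law of `(U, V)`, of its modification in which `U`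
and `V` are conditionally independent given `Z`; hence its mean is at most one. -/
lemma sum_mul_fiberMass_ratio_le_one (hw : w ∈ stdSimplex ℝ α) {Z : α → S} {U : α → S'}
    {V : α → S''} (hU : Z.FactorsThrough U) (hV : Z.FactorsThrough V) :
    ∑ x, w x * (fiberMass w U (U x) * fiberMass w V (V x) /
      (fiberMass w (fun x => (U x, V x)) (U x, V x) * fiberMass w Z (Z x))) ≤ 1 := by
  classical
  set q := fiberMass w fun x => (U x, V x)
  calc _ = ∑ x, ∑ y, ∑ z, (if U y = U x ∧ V z = V x then
        w x * (q (U x, V x))⁻¹ * (fiberMass w Z (Z x))⁻¹ * (w y * w z) else 0) := by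
        refine Finset.sum_congr rfl fun x _ => ?_
        simp only [← mul_ite_zero _ (w x * _ * _), ← Finset.mul_sum]
        rw [← fiberMass_mul_fiberMass_eq_sum, div_eq_mul_inv, mul_inv]
        ring
    _ = ∑ y, ∑ z, ∑ x, (if U y = U x ∧ V z = V x then
        w x * (q (U x, V x))⁻¹ * (fiberMass w Z (Z x))⁻¹ * (w y * w z) else 0) := by
        rw [Finset.sum_comm]
        exact Finset.sum_congr rfl fun y _ => Finset.sum_comm
    _ ≤ ∑ y, ∑ z, w y * condWeight w Z (Z y) z :=
        Finset.sum_le_sum fun y _ => Finset.sum_le_sum fun z _ =>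
          sum_fiber_mul_inv_le_condWeight hw.1 hU hV y z
    _ = ∑ y, w y * (fiberMass w Z (Z y) / fiberMass w Z (Z y)) := by
        simp only [← Finset.mul_sum, sum_condWeight]
    _ ≤ ∑ y, w y := Finset.sum_le_sum fun y _ => mul_le_of_le_one_right (hw.1 y) (div_self_le_one _)
    _ = 1 := hw.2

theorem finEntropy_submodular (hw : w ∈ stdSimplex ℝ α) {Z : α → S} {U : α → S'} {V : α → S''}
    (hU : Z.FactorsThrough U) (hV : Z.FactorsThrough V) :
    finEntropy w Z + finEntropy w (fun x => (U x, V x)) ≤ finEntropy w U + finEntropy w V := by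
  have hgibbs := sum_mul_logb_nonpos hw (fun x hx => div_pos
    (mul_pos (fiberMass_apply_pos hw.1 U hx) (fiberMass_apply_pos hw.1 V hx))
    (mul_pos (fiberMass_apply_pos hw.1 (fun x => (U x, V x)) hx) (fiberMass_apply_pos hw.1 Z hx)))
    (sum_mul_fiberMass_ratio_le_one hw hU hV)
  have hterm (x : α) : w x * logb 2 (fiberMass w U (U x) * fiberMass w V (V x) /
        (fiberMass w (fun x => (U x, V x)) (U x, V x) * fiberMass w Z (Z x))) =
      w x * logb 2 (fiberMass w U (U x)) + w x * logb 2 (fiberMass w V (V x)) -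
        (w x * logb 2 (fiberMass w (fun x => (U x, V x)) (U x, V x)) +
          w x * logb 2 (fiberMass w Z (Z x))) := by
    rcases (hw.1 x).eq_or_lt with hx | hx
    · simp [← hx]
    · have hUx := (fiberMass_apply_pos hw.1 U hx).ne'
      have hVx := (fiberMass_apply_pos hw.1 V hx).ne'
      have hUVx := (fiberMass_apply_pos hw.1 (fun x => (U x, V x)) hx).ne'
      have hZx := (fiberMass_apply_pos hw.1 Z hx).ne'
      rw [logb_div (mul_ne_zero hUx hVx) (mul_ne_zero hUVx hZx), logb_mul hUx hVx,
        logb_mul hUVx hZx]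
      ring
  simp only [hterm, Finset.sum_sub_distrib, Finset.sum_add_distrib] at hgibbs
  simp only [finEntropy]
  linarith

lemma finEntropy_prodMk_le_add (hw : w ∈ stdSimplex ℝ α) (U : α → S) (V : α → S') :
    finEntropy w (fun x => (U x, V x)) ≤ finEntropy w U + finEntropy w V := by
  have h := finEntropy_submodular hw (Z := fun _ => ()) (U := U) (V := V)
    (fun _ _ _ => rfl) (fun _ _ _ => rfl)
  rwa [finEntropy_const hw, zero_add] at h

lemma finEntropy_add_le_add_add (hw : w ∈ stdSimplex ℝ α) {Z : α → S} {U : α → S'} {V : α → S''}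
    {R : α → R'} {T : α → T'} (hUV : Z.FactorsThrough fun x => (U x, V x))
    (hR : Z.FactorsThrough R) (hT : T.FactorsThrough fun x => ((U x, V x), R x)) :
    finEntropy w Z + finEntropy w T ≤ finEntropy w U + finEntropy w V + finEntropy w R :=
  calc finEntropy w Z + finEntropy w T
      ≤ finEntropy w Z + finEntropy w (fun x => ((U x, V x), R x)) := by
        gcongr; exact finEntropy_le_of_factorsThrough hw.1 hT
    _ ≤ finEntropy w (fun x => (U x, V x)) + finEntropy w R := finEntropy_submodular hw hUV hR
    _ ≤ finEntropy w U + finEntropy w V + finEntropy w R := by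
        gcongr; exact finEntropy_prodMk_le_add hw U V

lemma finEntropy_le_add_logb_card [AddGroup G] (hw : w ∈ stdSimplex ℝ α) {U : α → S} {V : α → G}
    (φ : S → G) (s : Finset G) (h : ∀ x, V x - φ (U x) ∈ s) :
    finEntropy w V ≤ finEntropy w U + logb 2 s.card := by
  have hdet : V.FactorsThrough fun x => (U x, V x - φ (U x)) := by
    intro x y hxy
    obtain ⟨hU, hsub⟩ := Prod.mk.inj hxy
    simpa [hU] using hsub
  calc finEntropy w V ≤ finEntropy w fun x => (U x, V x - φ (U x)) :=
        finEntropy_le_of_factorsThrough hw.1 hdet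
    _ ≤ finEntropy w U + finEntropy w fun x => V x - φ (U x) := finEntropy_prodMk_le_add hw _ _
    _ ≤ finEntropy w U + logb 2 s.card := by
        gcongr; exact finEntropy_le_logb_card hw _ s h

end FiniteEntropy

section ConditionallyIndependentCopies

variable {ι α S S' : Type*} [Fintype ι] [Fintype α] {w : α → ℝ}

/-- The law on `α × (ι → α)` under which the base point `p.1` has law `w` and, given `b p.1`, the
points `p.2 i` are independent, each with the conditional law of a point of `α` given the value of
`b`. Given `b p.1` the base point is also independent of `p.2`, so it serves only to carry the
common value of `b`. -/
noncomputable def condIID (ι : Type*) [Fintype ι] (w : α → ℝ) (b : α → S) (p : α × (ι → α)) : ℝ :=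
  w p.1 * ∏ i, condWeight w b (b p.1) (p.2 i)

lemma sum_condWeight_apply (hw : ∀ x, 0 ≤ w x) (b : α → S) {x : α} (hx : 0 < w x) :
    ∑ y, condWeight w b (b x) y = 1 := by
  rw [sum_condWeight, div_self (fiberMass_apply_pos hw b hx).ne']

lemma sum_mul_sum_condWeight_mul (hw : ∀ x, 0 ≤ w x) (b : α → S) (φ : α → S → ℝ) :
    ∑ x, w x * ∑ y, condWeight w b (b x) y * φ y (b x) = ∑ y, w y * φ y (b y) := by
  classical
  simp only [Finset.mul_sum]
  rw [Finset.sum_comm]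
  refine Finset.sum_congr rfl fun y _ => ?_
  rcases (hw y).eq_or_lt with hy | hy
  · simp [condWeight, ← hy]
  have hterm (x : α) : w x * (condWeight w b (b x) y * φ y (b x)) =
      (if b x = b y then w x else 0) * (w y / fiberMass w b (b y) * φ y (b y)) := by
    by_cases h : b x = b y
    · simp [condWeight, h]
    · simp [condWeight, h, Ne.symm h]
  simp only [hterm, ← Finset.sum_mul, ← fiberMass_eq_sum_ite]
  have hne := (fiberMass_apply_pos hw b hy).ne'
  field_simp

variable [DecidableEq ι]

lemma sum_condIID_mul_prod (w : α → ℝ) (b : α → S) (h : α → ℝ) (g : α → ι → α → ℝ) :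
    ∑ p, condIID ι w b p * (h p.1 * ∏ i, g p.1 i (p.2 i)) =
      ∑ x, w x * h x * ∏ i, ∑ y, condWeight w b (b x) y * g x i y := by
  rw [Fintype.sum_prod_type]
  refine Finset.sum_congr rfl fun x _ => ?_
  rw [Fintype.prod_sum, Finset.mul_sum]
  refine Finset.sum_congr rfl fun t _ => ?_
  rw [condIID, Finset.prod_mul_distrib]
  ring

lemma sum_condIID_mul_base (hw : ∀ x, 0 ≤ w x) (b : α → S) (h : α → ℝ) :
    ∑ p, condIID ι w b p * h p.1 = ∑ x, w x * h x := by
  have key := sum_condIID_mul_prod (ι := ι) w b h fun _ _ _ => 1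
  simp only [Finset.prod_const_one, mul_one] at key
  rw [key]
  refine Finset.sum_congr rfl fun x _ => ?_
  rcases (hw x).eq_or_lt with hx | hx
  · simp [← hx]
  · rw [sum_condWeight_apply hw b hx, Finset.prod_const_one, mul_one]

lemma condIID_mem_stdSimplex (hw : w ∈ stdSimplex ℝ α) (b : α → S) :
    condIID ι w b ∈ stdSimplex ℝ (α × (ι → α)) := by
  refine ⟨fun p => mul_nonneg (hw.1 _) (Finset.prod_nonneg fun i _ =>
    condWeight_nonneg hw.1 _ _ _), ?_⟩
  simpa [hw.2] using sum_condIID_mul_base (ι := ι) hw.1 b fun _ => 1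

lemma sum_condIID_mul_eval (hw : ∀ x, 0 ≤ w x) (b : α → S) (i : ι) (φ : α → S → ℝ) :
    ∑ p, condIID ι w b p * φ (p.2 i) (b p.1) = ∑ x, w x * φ x (b x) := by
  have key := sum_condIID_mul_prod w b (fun _ => 1) fun x j y => if j = i then φ y (b x) else 1
  simp only [Finset.prod_ite_eq', Finset.mem_univ, if_true, one_mul, mul_one] at key
  rw [key, ← sum_mul_sum_condWeight_mul hw b φ]
  refine Finset.sum_congr rfl fun x _ => ?_
  rcases (hw x).eq_or_lt with hx | hx
  · simp [← hx]
  · rw [Finset.prod_eq_single_of_mem i (Finset.mem_univ i) fun j _ hj => by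
      simp [hj, sum_condWeight_apply hw b hx]]
    simp

lemma finEntropy_condIID_eval (hw : ∀ x, 0 ≤ w x) (b : α → S) (i : ι) (F : α → S → S') :
    finEntropy (condIID ι w b) (fun p => F (p.2 i) (b p.1)) = finEntropy w fun x => F x (b x) :=
  finEntropy_eq_of_identical_law fun φ => sum_condIID_mul_eval hw b i fun x s => φ (F x s)

lemma finEntropy_condIID_comp_perm (w : α → ℝ) (b : α → S) (σ : Equiv.Perm ι)
    (f : (ι → α) → S') : finEntropy (condIID ι w b) (fun p => f (p.2 ∘ σ)) =
      finEntropy (condIID ι w b) fun p => f p.2 := by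
  refine finEntropy_eq_of_identical_law fun φ => ?_
  rw [← ((Equiv.refl α).prodCongr (σ.arrowCongr (Equiv.refl α))).sum_comp]
  refine Finset.sum_congr rfl fun p _ => ?_
  simp [condIID, Function.comp_def, Equiv.arrowCongr,
    σ.symm.prod_comp fun i => condWeight w b (b p.1) (p.2 i)]

lemma finEntropy_condIID_pair (w : α → ℝ) (b : α → S) (f : α → α → S') {i j i' j' : ι}
    (h : i ≠ j) (h' : i' ≠ j') :
    finEntropy (condIID ι w b) (fun p => f (p.2 i') (p.2 j')) =
      finEntropy (condIID ι w b) fun p => f (p.2 i) (p.2 j) := by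
  obtain ⟨σ, rfl, rfl⟩ := MulAction.is_two_pretransitive_iff.mp
    (Equiv.Perm.isMultiplyPretransitive ι 2) h h'
  exact finEntropy_condIID_comp_perm w b σ fun t => f (t i) (t j)

lemma fiberMass_condIID (w : α → ℝ) (b : α → S) (a : α → S') (s : S) (c : ι → S') :
    fiberMass (condIID ι w b) (fun p => (b p.1, a ∘ p.2)) (s, c) =
      fiberMass w b s * ∏ i, (fiberMass w (fun x => (a x, b x)) (c i, s) / fiberMass w b s) := by
  classical
  have key := sum_condIID_mul_prod w b (fun x => if b x = s then 1 else 0) fun _ i y =>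
    if a y = c i then 1 else 0
  have hlhs (p : α × (ι → α)) : (if (b p.1, a ∘ p.2) = (s, c) then condIID ι w b p else 0) =
      condIID ι w b p * ((if b p.1 = s then 1 else 0) * ∏ i, if a (p.2 i) = c i then 1 else 0) := by
    rw [Fintype.prod_ite_zero]
    by_cases hb : b p.1 = s <;> simp [hb, funext_iff]
  simp only [fiberMass_eq_sum_ite (condIID ι w b), hlhs, key]
  rw [fiberMass_eq_sum_ite w b s, Finset.sum_mul]
  refine Finset.sum_congr rfl fun x _ => ?_
  by_cases hx : b x = s
  · simp only [hx, if_true, mul_one]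
    congr 1
    refine Finset.prod_congr rfl fun i _ => ?_
    simp only [condWeight, fiberMass_eq_sum_ite w fun x => (a x, b x), Finset.sum_div]
    refine Finset.sum_congr rfl fun y _ => ?_
    by_cases hb : b y = s <;> by_cases ha : a y = c i <;> simp [ha, hb, fiberMass_eq_sum_ite]
  · simp [hx]

theorem finEntropy_condIID_joint (hw : w ∈ stdSimplex ℝ α) (b : α → S) (a : α → S') :
    finEntropy (condIID ι w b) (fun p => (b p.1, a ∘ p.2)) = finEntropy w b +
      Fintype.card ι * (finEntropy w (fun x => (a x, b x)) - finEntropy w b) := by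
  set W := condIID ι w b
  set Lb : S → ℝ := fun s => logb 2 (fiberMass w b s)
  set Lab : α → S → ℝ := fun y s => logb 2 (fiberMass w (fun x => (a x, b x)) (a y, s))
  have hterm (p : α × (ι → α)) : W p * logb 2 (fiberMass W (fun p => (b p.1, a ∘ p.2))
      (b p.1, a ∘ p.2)) = W p * Lb (b p.1) +
        ∑ i, (W p * Lab (p.2 i) (b p.1) - W p * Lb (b p.1)) := by
    rcases ((condIID_mem_stdSimplex hw b).1 p).eq_or_lt with hp | hp
    · simp [W, ← hp]
    have hpos := fiberMass_apply_pos (condIID_mem_stdSimplex hw b).1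
      (fun p : α × (ι → α) => (b p.1, a ∘ p.2)) hp
    rw [fiberMass_condIID] at hpos ⊢
    have hprod := right_ne_zero_of_mul hpos.ne'
    have hfactor := Finset.prod_ne_zero_iff.mp hprod
    rw [logb_mul (left_ne_zero_of_mul hpos.ne') hprod, logb_prod _ _ hfactor, mul_add,
      Finset.mul_sum]
    congr 1
    refine Finset.sum_congr rfl fun i hi => ?_
    obtain ⟨hnum, hden⟩ := div_ne_zero_iff.mp (hfactor i hi)
    rw [logb_div hnum hden, mul_sub]
    rfl
  have hb : ∑ p, W p * Lb (b p.1) = -finEntropy w b := by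
    rw [sum_condIID_mul_base hw.1 b fun x => Lb (b x), finEntropy, neg_neg]
  have hab (i : ι) : ∑ p, W p * Lab (p.2 i) (b p.1) = -finEntropy w fun x => (a x, b x) := by
    rw [sum_condIID_mul_eval hw.1 b i Lab, finEntropy, neg_neg]
  rw [finEntropy, Finset.sum_congr rfl fun p _ => hterm p, Finset.sum_add_distrib, Finset.sum_comm]
  simp only [Finset.sum_sub_distrib, hb, hab, Finset.sum_const, Finset.card_univ, nsmul_eq_mul]
  ring

end ConditionallyIndependentCopies

section SumsetInequalities

variable {α S G : Type*} [Fintype α] {w : α → ℝ}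

lemma factorsThrough_of_eq_comp {X Y Z : Type*} {g : X → Z} {f : X → Y} (φ : Y → Z)
    (h : ∀ x, g x = φ (f x)) : g.FactorsThrough f :=
  fun x y hxy => by rw [h, h, hxy]

lemma card_mul_le_finEntropy_condIID {ι : Type*} [Fintype ι] [DecidableEq ι]
    (hw : w ∈ stdSimplex ℝ α) (a : α → G) (b : α → S) :
    Fintype.card ι * (finEntropy w a - mutualInfo w a b) ≤
      finEntropy (condIID ι w b) fun p => a ∘ p.2 := by
  have hjoint := finEntropy_condIID_joint (ι := ι) hw b a
  have hsub := finEntropy_prodMk_le_add (condIID_mem_stdSimplex hw b) (fun p => b p.1)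
    fun p : α × (ι → α) => a ∘ p.2
  have hbase : finEntropy (condIID ι w b) (fun p => b p.1) = finEntropy w b :=
    finEntropy_eq_of_identical_law fun φ => sum_condIID_mul_base hw.1 b fun x => φ (b x)
  rw [mutualInfo]
  linarith

/-- Entropy of `m A₁ + n A₂` for copies `A₁`, `A₂` of `a` that are conditionally independent given
`b`. They are taken among three such copies, since the inequalities below also use the third. -/
noncomputable def copyEntropy [AddCommGroup G] (w : α → ℝ) (a : α → G) (b : α → S) (m n : ℤ) : ℝ :=
  finEntropy (condIID (Fin 3) w b) fun p => m • a (p.2 0) + n • a (p.2 1)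

section

variable (hw : w ∈ stdSimplex ℝ α) (a : α → G) (b : α → S)
include hw

lemma finEntropy_condIID_pair_le (i j : Fin 3) :
    finEntropy (condIID (Fin 3) w b) (fun p => (a (p.2 i), a (p.2 j))) ≤ 2 * finEntropy w a := by
  have h := finEntropy_prodMk_le_add (condIID_mem_stdSimplex hw b) (fun p => a (p.2 i))
    fun p : α × (Fin 3 → α) => a (p.2 j)
  rw [finEntropy_condIID_eval hw.1 b i fun y _ => a y,
    finEntropy_condIID_eval hw.1 b j fun y _ => a y] at h
  linarith

lemma le_finEntropy_condIID_base_pair :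
    2 * (finEntropy w a - mutualInfo w a b) + finEntropy w b ≤
      finEntropy (condIID (Fin 3) w b) fun p => (b p.1, a (p.2 0), a (p.2 1)) := by
  have hW := condIID_mem_stdSimplex (ι := Fin 3) hw b
  have hsub := finEntropy_submodular hW (Z := fun p => b p.1)
    (U := fun p => (b p.1, a (p.2 0), a (p.2 1))) (V := fun p => (a (p.2 2), b p.1))
    (factorsThrough_of_eq_comp (fun c => c.1) fun _ => rfl)
    (factorsThrough_of_eq_comp (fun c => c.2) fun _ => rfl)
  have hdet := finEntropy_le_of_factorsThrough hW.1
    (g := fun p : α × (Fin 3 → α) => (b p.1, a ∘ p.2))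
    (factorsThrough_of_eq_comp (f := fun p => ((b p.1, a (p.2 0), a (p.2 1)), (a (p.2 2), b p.1)))
      (fun c => (c.1.1, ![c.1.2.1, c.1.2.2, c.2.1])) fun p => by
        ext i
        · rfl
        · fin_cases i <;> rfl)
  rw [finEntropy_condIID_joint hw] at hdet
  rw [finEntropy_condIID_eval hw.1 b 2 fun y s => (a y, s),
    finEntropy_eq_of_identical_law fun φ => sum_condIID_mul_base hw.1 b fun x => φ (b x)] at hsub
  rw [mutualInfo]
  simp only [Fintype.card_fin, Nat.cast_ofNat] at hdet
  linarith

lemma finEntropy_condIID_le_add_sub {i j : Fin 3} {T T' T'' : Type*}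
    {Z : α × (Fin 3 → α) → T} {P : α × (Fin 3 → α) → T'} {Q : α × (Fin 3 → α) → T''}
    (hPQ : Z.FactorsThrough fun p => (P p, Q p))
    (hZ : Z.FactorsThrough fun p => (a (p.2 i), a (p.2 j)))
    (hdet : Function.FactorsThrough (fun p : α × (Fin 3 → α) => a ∘ p.2)
      fun p => ((P p, Q p), (a (p.2 i), a (p.2 j)))) :
    finEntropy (condIID (Fin 3) w b) Z ≤ finEntropy (condIID (Fin 3) w b) P +
      finEntropy (condIID (Fin 3) w b) Q - finEntropy w a + 3 * mutualInfo w a b := by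
  have hsub := finEntropy_add_le_add_add (condIID_mem_stdSimplex hw b) hPQ hZ hdet
  have htriple := card_mul_le_finEntropy_condIID (ι := Fin 3) hw a b
  have hpair := finEntropy_condIID_pair_le hw a b i j
  simp only [Fintype.card_fin, Nat.cast_ofNat] at htriple
  linarith

end

section

variable [AddCommGroup G]

lemma finEntropy_condIID_smul_add_smul (w : α → ℝ) (a : α → G) (b : α → S) (m n : ℤ) {i j : Fin 3}
    (h : i ≠ j) : finEntropy (condIID (Fin 3) w b) (fun p => m • a (p.2 i) + n • a (p.2 j)) =
      copyEntropy w a b m n :=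
  finEntropy_condIID_pair w b (fun x y => m • a x + n • a y) Fin.zero_ne_one h

lemma copyEntropy_one_zero (hw : ∀ x, 0 ≤ w x) (a : α → G) (b : α → S) :
    copyEntropy w a b 1 0 = finEntropy w a := by
  simpa [copyEntropy] using finEntropy_condIID_eval hw b (0 : Fin 3) fun y _ => a y

variable (hw : w ∈ stdSimplex ℝ α)
include hw

lemma finEntropy_condIID_add_sub_le (a : α → G) (b : α → S) :
    finEntropy (condIID (Fin 3) w b) (fun p => a (p.2 0) + a (p.2 1) - a (p.2 2)) ≤
      2 * copyEntropy w a b 1 (-1) - finEntropy w a + 3 * mutualInfo w a b := by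
  have hW := condIID_mem_stdSimplex (ι := Fin 3) hw b
  have hsub := finEntropy_submodular hW
    (Z := fun p => a (p.2 0) + a (p.2 1) - a (p.2 2))
    (U := fun p => (a (p.2 0) - a (p.2 2), a (p.2 1)))
    (V := fun p => (a (p.2 1) - a (p.2 2), a (p.2 0)))
    (factorsThrough_of_eq_comp (fun c => c.1 + c.2) fun p => by module)
    (factorsThrough_of_eq_comp (fun c => c.1 + c.2) fun p => by module)
  have hdet := finEntropy_le_of_factorsThrough hW.1 (g := fun p : α × (Fin 3 → α) => a ∘ p.2)
    (factorsThrough_of_eq_comp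
      (f := fun p => ((a (p.2 0) - a (p.2 2), a (p.2 1)), (a (p.2 1) - a (p.2 2), a (p.2 0))))
      (fun c => ![c.2.2, c.1.2, c.1.2 - c.2.1]) fun p => by ext i; fin_cases i <;> simp)
  have htriple := card_mul_le_finEntropy_condIID (ι := Fin 3) hw a b
  have hdiff {i j : Fin 3} (h : i ≠ j) (k : Fin 3) :
      finEntropy (condIID (Fin 3) w b) (fun p => (a (p.2 i) - a (p.2 j), a (p.2 k))) ≤
        copyEntropy w a b 1 (-1) + finEntropy w a := by
    have h' := finEntropy_prodMk_le_add hW (fun p => a (p.2 i) - a (p.2 j)) fun p => a (p.2 k)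
    rw [finEntropy_condIID_eval hw.1 b k fun y _ => a y] at h'
    simpa [sub_eq_add_neg, ← finEntropy_condIID_smul_add_smul w a b 1 (-1) h] using h'
  have hU := hdiff (show (0 : Fin 3) ≠ 2 by decide) 1
  have hV := hdiff (show (1 : Fin 3) ≠ 2 by decide) 0
  simp only [Fintype.card_fin, Nat.cast_ofNat] at htriple
  linarith

lemma copyEntropy_one_neg_one_le (a b : α → G) :
    copyEntropy w a b 1 (-1) ≤
      2 * finEntropy w (fun x => a x + b x) - finEntropy w b + 2 * mutualInfo w a b := by
  have hsub := finEntropy_add_le_add_add (condIID_mem_stdSimplex (ι := Fin 3) hw b)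
    (Z := fun p => (1 : ℤ) • a (p.2 0) + (-1 : ℤ) • a (p.2 1))
    (U := fun p => a (p.2 0) + b p.1) (V := fun p => a (p.2 1) + b p.1)
    (R := fun p => (a (p.2 0), a (p.2 1))) (T := fun p => (b p.1, a (p.2 0), a (p.2 1)))
    (factorsThrough_of_eq_comp (fun c => c.1 - c.2) fun p => by module)
    (factorsThrough_of_eq_comp (fun c => c.1 - c.2) fun p => by module)
    (factorsThrough_of_eq_comp (fun c => (c.1.1 - c.2.1, c.2.1, c.2.2)) fun p => by simp)
  rw [finEntropy_condIID_eval hw.1 b 0 fun y s => a y + s,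
    finEntropy_condIID_eval hw.1 b 1 fun y s => a y + s] at hsub
  have hpair := finEntropy_condIID_pair_le hw a b 0 1
  have hbase := le_finEntropy_condIID_base_pair hw a b
  rw [copyEntropy]
  linarith

end

/-- The increment allowed to `copyEntropy w a b 1 c` when `|c|` grows by one: four times the
doubling gap `H(a + b) - (H(a) + H(b)) / 2` plus ten times the mutual information. -/
noncomputable def entropyGrowth [AddCommGroup G] (w : α → ℝ) (a b : α → G) : ℝ :=
  4 * finEntropy w (fun x => a x + b x) - 2 * finEntropy w a - 2 * finEntropy w b +
    10 * mutualInfo w a b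

variable [AddCommGroup G] (hw : w ∈ stdSimplex ℝ α) (a b : α → G)
include hw

lemma finEntropy_condIID_add_sub_le_growth :
    finEntropy (condIID (Fin 3) w b) (fun p => a (p.2 0) + a (p.2 1) - a (p.2 2)) ≤
      finEntropy w a - 3 * mutualInfo w a b + entropyGrowth w a b := by
  rw [entropyGrowth]
  linarith [finEntropy_condIID_add_sub_le hw a b, copyEntropy_one_neg_one_le hw a b]

lemma copyEntropy_one_add_one_le (c : ℤ) :
    copyEntropy w a b 1 (c + 1) ≤ copyEntropy w a b 1 c + entropyGrowth w a b := by
  have h := finEntropy_condIID_le_add_sub hw a b (i := 0) (j := 1)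
    (Z := fun p => (1 : ℤ) • a (p.2 0) + (c + 1) • a (p.2 1))
    (P := fun p => a (p.2 0) + a (p.2 1) - a (p.2 2))
    (Q := fun p => (1 : ℤ) • a (p.2 2) + c • a (p.2 1))
    (factorsThrough_of_eq_comp (fun d => d.1 + d.2) fun p => by module)
    (factorsThrough_of_eq_comp (fun d => d.1 + (c + 1) • d.2) fun p => by module)
    (factorsThrough_of_eq_comp (fun d => ![d.2.1, d.2.2, d.2.1 + d.2.2 - d.1.1]) fun p => by
      ext i; fin_cases i <;> simp)
  rw [finEntropy_condIID_smul_add_smul w a b 1 (c + 1) (by decide),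
    finEntropy_condIID_smul_add_smul w a b 1 c (by decide)] at h
  linarith [finEntropy_condIID_add_sub_le_growth hw a b]

lemma copyEntropy_one_neg_sub_one_le (c : ℤ) :
    copyEntropy w a b 1 (-c - 1) ≤ copyEntropy w a b 1 c + entropyGrowth w a b := by
  have h := finEntropy_condIID_le_add_sub hw a b (i := 0) (j := 2)
    (Z := fun p => (1 : ℤ) • a (p.2 0) + (-c - 1) • a (p.2 2))
    (P := fun p => a (p.2 0) + a (p.2 1) - a (p.2 2))
    (Q := fun p => (1 : ℤ) • a (p.2 1) + c • a (p.2 2))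
    (factorsThrough_of_eq_comp (fun d => d.1 - d.2) fun p => by module)
    (factorsThrough_of_eq_comp (fun d => d.1 + (-c - 1) • d.2) fun p => by module)
    (factorsThrough_of_eq_comp (fun d => ![d.2.1, d.1.1 + d.2.2 - d.2.1, d.2.2]) fun p => by
      ext i; fin_cases i <;> simp)
  rw [finEntropy_condIID_smul_add_smul w a b 1 (-c - 1) (by decide),
    finEntropy_condIID_smul_add_smul w a b 1 c (by decide)] at h
  linarith [finEntropy_condIID_add_sub_le_growth hw a b]

lemma copyEntropy_one_le (c : ℤ) :
    copyEntropy w a b 1 c ≤ finEntropy w a + |(c : ℝ)| * entropyGrowth w a b := by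
  have hnat (n : ℕ) : copyEntropy w a b 1 n ≤ finEntropy w a + n * entropyGrowth w a b := by
    induction n with
    | zero => simp [copyEntropy_one_zero hw.1]
    | succ n ih =>
      push_cast
      linarith [copyEntropy_one_add_one_le hw a b n]
  rcases c with n | n
  · simpa using hnat n
  · have h := copyEntropy_one_neg_sub_one_le hw a b n
    have habs : |((Int.negSucc n : ℤ) : ℝ)| = n + 1 := by
      rw [Int.cast_negSucc, abs_neg, Nat.abs_cast, Nat.cast_succ]
    rw [habs, show Int.negSucc n = -(n : ℤ) - 1 by lia]
    linarith [hnat n]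

lemma copyEntropy_le (p r : ℤ) :
    copyEntropy w a b p (-r) ≤ finEntropy w a + (|(p : ℝ)| + |(r : ℝ)|) * entropyGrowth w a b +
      3 * mutualInfo w a b := by
  have h := finEntropy_condIID_le_add_sub hw a b (i := 0) (j := 1)
    (Z := fun t => p • a (t.2 0) + -r • a (t.2 1))
    (P := fun t => (1 : ℤ) • a (t.2 2) + p • a (t.2 0))
    (Q := fun t => (1 : ℤ) • a (t.2 2) + r • a (t.2 1))
    (factorsThrough_of_eq_comp (fun d => d.1 - d.2) fun t => by module)
    (factorsThrough_of_eq_comp (fun d => p • d.1 + -r • d.2) fun t => rfl)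
    (factorsThrough_of_eq_comp (fun d => ![d.2.1, d.2.2, d.1.1 - p • d.2.1]) fun t => by
      ext i; fin_cases i <;> simp)
  rw [finEntropy_condIID_smul_add_smul w a b p (-r) (by decide),
    finEntropy_condIID_smul_add_smul w a b 1 p (by decide),
    finEntropy_condIID_smul_add_smul w a b 1 r (by decide)] at h
  linarith [copyEntropy_one_le hw a b p, copyEntropy_one_le hw a b r]

lemma finEntropy_smul_add_smul_le_copyEntropy (p r : ℤ) :
    finEntropy w (fun x => p • a x + r • b x) ≤ copyEntropy w a b p (-r) +
      finEntropy w (fun x => a x + b x) - finEntropy w a + mutualInfo w a b := by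
  have hsub := finEntropy_add_le_add_add (condIID_mem_stdSimplex (ι := Fin 3) hw b)
    (Z := fun t => p • a (t.2 0) + r • b t.1)
    (U := fun t => p • a (t.2 0) + -r • a (t.2 1)) (V := fun t => a (t.2 1) + b t.1)
    (R := fun t => (a (t.2 0), b t.1)) (T := fun t => (b t.1, a (t.2 0), a (t.2 1)))
    (factorsThrough_of_eq_comp (fun c => c.1 + r • c.2) fun t => by module)
    (factorsThrough_of_eq_comp (fun c => p • c.1 + r • c.2) fun t => rfl)
    (factorsThrough_of_eq_comp (fun c => (c.2.2, c.2.1, c.1.2 - c.2.2)) fun t => by simp)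
  rw [finEntropy_condIID_eval hw.1 b 0 fun y s => p • a y + r • s,
    finEntropy_condIID_smul_add_smul w a b p (-r) (by decide),
    finEntropy_condIID_eval hw.1 b 1 fun y s => a y + s,
    finEntropy_condIID_eval hw.1 b 0 fun y s => (a y, s)] at hsub
  have hbase := le_finEntropy_condIID_base_pair hw a b
  rw [mutualInfo] at hbase ⊢
  linarith

theorem finEntropy_smul_add_smul_sub_le (p r : ℤ) :
    finEntropy w (fun x => p • a x + r • b x) - (finEntropy w a + finEntropy w b) / 2 ≤
      (4 * (|(p : ℝ)| + |(r : ℝ)|) + 1) *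
          (finEntropy w (fun x => a x + b x) - (finEntropy w a + finEntropy w b) / 2) +
        (10 * (|(p : ℝ)| + |(r : ℝ)|) + 4) * mutualInfo w a b := by
  have hcopy := copyEntropy_le hw a b p r
  rw [entropyGrowth] at hcopy
  linarith [finEntropy_smul_add_smul_le_copyEntropy hw a b p r]

end SumsetInequalities

section SimpleRandomVariables

variable {Ω T S G : Type*} [MeasurableSpace Ω] {P : Measure Ω}

/-- The law of a random variable `F` with finitely many values, as weights on its range. -/
noncomputable def rangeLaw (P : Measure Ω) (F : SimpleFunc Ω T) (a : F.range) : ℝ :=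
  P.real (F ⁻¹' {a.1})

lemma fiberMass_rangeLaw [IsFiniteMeasure P] (F : SimpleFunc Ω T) (f : T → S) (s : S) :
    fiberMass (rangeLaw P F) (fun a => f a) s = P.real ((fun ω => f (F ω)) ⁻¹' {s}) := by
  classical
  have hmap : (fun ω => f (F ω)) ⁻¹' {s} = F ⁻¹' ({a ∈ F.range | f a = s} : Finset T) :=
    (F.map_preimage_singleton f s :)
  rw [hmap, ← sum_measureReal_preimage_singleton _ fun y _ => F.measurableSet_fiber y,
    fiberMass_eq_sum_ite, Finset.sum_filter]
  exact Finset.sum_coe_sort F.range fun a => if f a = s then P.real (F ⁻¹' {a}) else 0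

lemma rangeLaw_mem_stdSimplex [IsProbabilityMeasure P] (F : SimpleFunc Ω T) :
    rangeLaw P F ∈ stdSimplex ℝ F.range := by
  refine ⟨fun a => measureReal_nonneg, ?_⟩
  simpa [fiberMass, Set.preimage] using fiberMass_rangeLaw (P := P) F (fun _ => ()) ()

lemma entOf_comp_simpleFunc [IsFiniteMeasure P] (F : SimpleFunc Ω T) (f : T → S) :
    entOf P (fun ω => f (F ω)) = finEntropy (rangeLaw P F) fun a => f a := by
  classical
  have hsum := sum_mul_comp_eq_sum_fiberMass (rangeLaw P F) (fun a => f a)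
    (fun s => logb 2 (fiberMass (rangeLaw P F) (fun a => f a) s)) (F.range.image f)
    fun a => Finset.mem_image_of_mem f a.2
  rw [finEntropy, hsum, entOf, ← Finset.sum_neg_distrib, tsum_eq_sum fun s hs => ?_]
  · refine Finset.sum_congr rfl fun s _ => ?_
    rw [fiberMass_rangeLaw]
    rfl
  · have hempty : (fun ω => f (F ω)) ⁻¹' {s} = ∅ :=
      Set.eq_empty_of_forall_notMem fun ω hω =>
        hs (hω ▸ Finset.mem_image_of_mem f (F.mem_range_self ω))
    simp [hempty]

variable [IsProbabilityMeasure P]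

lemma entOf_le_add_logb_card [AddGroup G] (U : SimpleFunc Ω S) (V : SimpleFunc Ω G) (φ : S → G)
    (s : Finset G) (h : ∀ ω, V ω - φ (U ω) ∈ s) : entOf P V ≤ entOf P U + logb 2 s.card := by
  have hU : entOf P U = _ := entOf_comp_simpleFunc (U.pair V) Prod.fst
  have hV : entOf P V = _ := entOf_comp_simpleFunc (U.pair V) Prod.snd
  rw [hU, hV]
  refine finEntropy_le_add_logb_card (rangeLaw_mem_stdSimplex (U.pair V)) φ s fun c => ?_
  obtain ⟨ω, hω⟩ := SimpleFunc.mem_range.mp c.2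
  simpa [← hω] using h ω

theorem entOf_smul_add_smul_sub_le [AddCommGroup G] (A B : SimpleFunc Ω G) (p r : ℤ) :
    entOf P (fun ω => p • A ω + r • B ω) - (entOf P A + entOf P B) / 2 ≤
      (4 * (|(p : ℝ)| + |(r : ℝ)|) + 1) *
          (entOf P (fun ω => A ω + B ω) - (entOf P A + entOf P B) / 2) +
        (10 * (|(p : ℝ)| + |(r : ℝ)|) + 4) *
          (entOf P A + entOf P B - entOf P fun ω => (A ω, B ω)) := by
  have h := finEntropy_smul_add_smul_sub_le (rangeLaw_mem_stdSimplex (P := P) (A.pair B))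
    (fun c => c.1.1) (fun c => c.1.2) p r
  simp only [mutualInfo, ← entOf_comp_simpleFunc (A.pair B) fun c => p • c.1 + r • c.2,
    ← entOf_comp_simpleFunc (A.pair B) fun c => c.1 + c.2,
    ← entOf_comp_simpleFunc (A.pair B) Prod.fst, ← entOf_comp_simpleFunc (A.pair B) Prod.snd,
    ← entOf_comp_simpleFunc (A.pair B) fun c => (c.1, c.2)] at h
  exact h

end SimpleRandomVariables

section Floors

variable {Ω S T : Type*} [MeasurableSpace Ω]

lemma entOf_comp_of_injective (P : Measure Ω) (f : Ω → S) {φ : S → T} (hφ : φ.Injective) :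
    entOf P (fun ω => φ (f ω)) = entOf P f := by
  have hpre (s : S) : (fun ω => φ (f ω)) ⁻¹' {φ s} = f ⁻¹' {s} := by
    ext ω
    exact hφ.eq_iff
  rw [entOf, entOf, ← hφ.tsum_eq fun t ht => ?_]
  · simp only [hpre]
  · by_contra hrange
    have hempty : (fun ω => φ (f ω)) ⁻¹' {t} = ∅ :=
      Set.eq_empty_of_forall_notMem fun ω hω => hrange ⟨f ω, hω⟩
    simp [hempty] at ht

lemma injective_intCast_div_two_pow (n : ℕ) :
    Function.Injective fun z : ℤ => (z : ℝ) / (2 : ℝ) ^ n := fun x y h => by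
  simpa using h

lemma Hn_eq_entOf_floor (P : Measure Ω) (n : ℕ) (X : Ω → ℝ) :
    Hn P n X = entOf P fun ω => ⌊(2 : ℝ) ^ n * X ω⌋ :=
  entOf_comp_of_injective P _ (injective_intCast_div_two_pow n)

lemma Hn2_eq_entOf_floor (P : Measure Ω) (n : ℕ) (X Y : Ω → ℝ) :
    Hn2 P n X Y = entOf P fun ω => (⌊(2 : ℝ) ^ n * X ω⌋, ⌊(2 : ℝ) ^ n * Y ω⌋) :=
  entOf_comp_of_injective P (fun ω => (⌊(2 : ℝ) ^ n * X ω⌋, ⌊(2 : ℝ) ^ n * Y ω⌋))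
    ((injective_intCast_div_two_pow n).prodMap (injective_intCast_div_two_pow n))

lemma exists_simpleFunc_eq_floor {X : Ω → ℝ} (hX : Measurable X) {c : ℝ} (hc : ∀ ω, |X ω| ≤ c)
    (n : ℕ) : ∃ A : SimpleFunc Ω ℤ, ∀ ω, A ω = ⌊(2 : ℝ) ^ n * X ω⌋ := by
  have hrange : Set.range (fun ω => ⌊(2 : ℝ) ^ n * X ω⌋) ⊆
      Set.Icc ⌊(2 : ℝ) ^ n * -c⌋ ⌊(2 : ℝ) ^ n * c⌋ := by
    rintro _ ⟨ω, rfl⟩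
    obtain ⟨hlow, hupp⟩ := abs_le.mp (hc ω)
    constructor <;> exact Int.floor_le_floor (by gcongr)
  exact ⟨⟨fun ω => ⌊(2 : ℝ) ^ n * X ω⌋,
    fun z => (hX.const_mul _).floor (measurableSet_singleton z),
    (Set.finite_Icc _ _).subset hrange⟩, fun ω => rfl⟩

lemma floor_sub_floor_mem_Icc {u v : ℝ} {K : ℕ} (h : |u - v| ≤ K) :
    ⌊u⌋ - ⌊v⌋ ∈ Finset.Icc (-K : ℤ) K := by
  obtain ⟨hlow, hupp⟩ := abs_le.mp h
  have h₁ : ⌊v⌋ - (K : ℤ) ≤ ⌊u⌋ := by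
    rw [← Int.floor_sub_intCast]
    exact Int.floor_le_floor (by push_cast; linarith)
  have h₂ : ⌊u⌋ ≤ ⌊v⌋ + (K : ℤ) := by
    rw [← Int.floor_add_intCast]
    exact Int.floor_le_floor (by push_cast; linarith)
  rw [Finset.mem_Icc]
  constructor <;> linarith

lemma floor_add_floor_sub_floor_add_mem_Icc (u v : ℝ) :
    ⌊u⌋ + ⌊v⌋ - ⌊u + v⌋ ∈ Finset.Icc (-1 : ℤ) 0 := by
  have h₁ := Int.le_floor_add u v
  have h₂ := Int.le_floor_add_floor u v
  rw [Finset.mem_Icc]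
  constructor <;> linarith

lemma abs_linear_combination_sub_floor_le (p r : ℤ) {q : ℤ} (hq : q ≠ 0) (u v : ℝ) :
    |((p : ℝ) / q * u + (r : ℝ) / q * v) - ((p • ⌊u⌋ + r • ⌊v⌋ : ℤ) : ℝ) / q| ≤
      (p.natAbs + r.natAbs : ℕ) := by
  have hq' : (1 : ℝ) ≤ |(q : ℝ)| := by exact_mod_cast Int.one_le_abs hq
  have hdiff : ((p : ℝ) / q * u + (r : ℝ) / q * v) - ((p • ⌊u⌋ + r • ⌊v⌋ : ℤ) : ℝ) / q =
      (p * Int.fract u + r * Int.fract v) / q := by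
    rw [Int.fract, Int.fract]
    push_cast [smul_eq_mul]
    ring
  have hfract (x : ℝ) (z : ℤ) : |z * Int.fract x| ≤ z.natAbs := by
    rw [abs_mul, Nat.cast_natAbs, Int.cast_abs, abs_of_nonneg (Int.fract_nonneg x)]
    exact mul_le_of_le_one_right (abs_nonneg _) (Int.fract_lt_one x).le
  calc _ = |p * Int.fract u + r * Int.fract v| / |(q : ℝ)| := by rw [hdiff, abs_div]
    _ ≤ |p * Int.fract u + r * Int.fract v| := div_le_self (abs_nonneg _) hq'
    _ ≤ _ := by
      push_cast
      exact (abs_add_le _ _).trans (add_le_add (hfract u p) (hfract v r))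

variable {P : Measure Ω} [IsProbabilityMeasure P]

lemma entOf_floor_add_floor_le {X Y : Ω → ℝ} (hX : Measurable X) (hY : Measurable Y) {c d : ℝ}
    (hc : ∀ ω, |X ω| ≤ c) (hd : ∀ ω, |Y ω| ≤ d) (n : ℕ) :
    entOf P (fun ω => ⌊(2 : ℝ) ^ n * X ω⌋ + ⌊(2 : ℝ) ^ n * Y ω⌋) ≤
      Hn P n (fun ω => X ω + Y ω) + 1 := by
  obtain ⟨A, hA⟩ := exists_simpleFunc_eq_floor hX hc n
  obtain ⟨B, hB⟩ := exists_simpleFunc_eq_floor hY hd n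
  obtain ⟨C, hC⟩ := exists_simpleFunc_eq_floor (X := fun ω => X ω + Y ω) (hX.add hY)
    (fun ω => (abs_add_le _ _).trans (add_le_add (hc ω) (hd ω))) n
  have hfloor (ω : Ω) : (A + B) ω - C ω ∈ Finset.Icc (-1 : ℤ) 0 := by
    rw [SimpleFunc.add_apply, hA, hB, hC, mul_add]
    exact floor_add_floor_sub_floor_add_mem_Icc _ _
  have hle := entOf_le_add_logb_card (P := P) C (A + B) id _ hfloor
  have hcard : logb 2 (Finset.Icc (-1 : ℤ) 0).card = 1 := by simp
  rw [hcard] at hle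
  simp only [Hn_eq_entOf_floor, ← hA, ← hB, ← hC]
  exact hle

lemma Hn_linear_combination_le {X Y : Ω → ℝ} (hX : Measurable X) (hY : Measurable Y) {c d : ℝ}
    (hc : ∀ ω, |X ω| ≤ c) (hd : ∀ ω, |Y ω| ≤ d) (p r : ℤ) {q : ℤ} (hq : q ≠ 0) (n : ℕ) :
    Hn P n (fun ω => (p : ℝ) / q * X ω + (r : ℝ) / q * Y ω) ≤
      entOf P (fun ω => p • ⌊(2 : ℝ) ^ n * X ω⌋ + r • ⌊(2 : ℝ) ^ n * Y ω⌋) +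
        logb 2 (2 * (p.natAbs + r.natAbs : ℕ) + 1) := by
  obtain ⟨A, hA⟩ := exists_simpleFunc_eq_floor hX hc n
  obtain ⟨B, hB⟩ := exists_simpleFunc_eq_floor hY hd n
  have hbound (ω : Ω) : |(p : ℝ) / q * X ω + (r : ℝ) / q * Y ω| ≤
      |(p : ℝ) / q| * c + |(r : ℝ) / q| * d := by
    refine (abs_add_le _ _).trans ?_
    rw [abs_mul, abs_mul]
    gcongr
    exacts [hc ω, hd ω]
  obtain ⟨D, hD⟩ := exists_simpleFunc_eq_floor
    (X := fun ω => (p : ℝ) / q * X ω + (r : ℝ) / q * Y ω)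
    ((hX.const_mul ((p : ℝ) / q)).add (hY.const_mul ((r : ℝ) / q))) hbound n
  have hfloor (ω : Ω) : D ω - ⌊((p • A + r • B) ω : ℝ) / q⌋ ∈
      Finset.Icc (-(p.natAbs + r.natAbs : ℕ) : ℤ) (p.natAbs + r.natAbs : ℕ) := by
    have h := abs_linear_combination_sub_floor_le p r hq ((2 : ℝ) ^ n * X ω) ((2 : ℝ) ^ n * Y ω)
    rw [← hA, ← hB, mul_left_comm, mul_left_comm _ _ (Y ω), ← mul_add] at h
    rw [hD]
    exact floor_sub_floor_mem_Icc h
  have hle := entOf_le_add_logb_card (P := P) (p • A + r • B) D (fun z => ⌊(z : ℝ) / q⌋) _ hfloor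
  have hcard (N : ℕ) : ((Finset.Icc (-N : ℤ) N).card : ℝ) = 2 * N + 1 := by
    rw [Int.card_Icc, show (N + 1 - -N : ℤ).toNat = 2 * N + 1 by lia]
    push_cast
    rfl
  rw [hcard] at hle
  simp only [Hn_eq_entOf_floor, ← hA, ← hB, ← hD]
  exact hle

theorem Hn_linear_combination_sub_le {X Y : Ω → ℝ} (hX : Measurable X) (hY : Measurable Y)
    {c d : ℝ} (hc : ∀ ω, |X ω| ≤ c) (hd : ∀ ω, |Y ω| ≤ d) (p r : ℤ) {q : ℤ} (hq : q ≠ 0) (n : ℕ) :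
    Hn P n (fun ω => (p : ℝ) / q * X ω + (r : ℝ) / q * Y ω) - (Hn P n X + Hn P n Y) / 2 ≤
      (4 * (p.natAbs + r.natAbs : ℕ) + 1) *
          (Hn P n (fun ω => X ω + Y ω) - (Hn P n X + Hn P n Y) / 2) +
        (10 * (p.natAbs + r.natAbs : ℕ) + 4) * (Hn P n X + Hn P n Y - Hn2 P n X Y) +
          (4 * (p.natAbs + r.natAbs : ℕ) + 1 + logb 2 (2 * (p.natAbs + r.natAbs : ℕ) + 1)) := by
  have hcomb := Hn_linear_combination_le (P := P) hX hY hc hd p r hq n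
  have hsum := entOf_floor_add_floor_le (P := P) hX hY hc hd n
  obtain ⟨A, hA⟩ := exists_simpleFunc_eq_floor hX hc n
  obtain ⟨B, hB⟩ := exists_simpleFunc_eq_floor hY hd n
  have hint := entOf_smul_add_smul_sub_le (P := P) A B p r
  have habs : |(p : ℝ)| + |(r : ℝ)| = (p.natAbs + r.natAbs : ℕ) := by
    push_cast [Nat.cast_natAbs]
    rfl
  simp only [habs] at hint
  simp only [Hn_eq_entOf_floor P n X, Hn_eq_entOf_floor P n Y, Hn2_eq_entOf_floor, ← hA, ← hB]
    at hcomb hsum ⊢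
  have hmul := mul_le_mul_of_nonneg_left hsum
    (show (0 : ℝ) ≤ 4 * (p.natAbs + r.natAbs : ℕ) + 1 by positivity)
  linarith

lemma ratCast_eq_num_mul_div_den_mul (x : ℚ) {m : ℕ} (hm : m ≠ 0) :
    (x : ℝ) = (x.num * m : ℤ) / (x.den * m : ℤ) := by
  have hm' : (m : ℝ) ≠ 0 := by exact_mod_cast hm
  rw [Rat.cast_def]
  push_cast
  rw [mul_div_mul_right _ _ hm']

end Floors

/-- Theorem: for all nonzero rationals `k, l` there are a positive integer `d₁ = d₁(k,l)`,
a nonnegative integer `d₂ = d₂(k,l)` and a constant `B = B(k,l) > 0` such that for all real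
random variables `X, Y` with bounded ranges (not necessarily independent) and all `n`,
`Hₙ(kX+lY) − (Hₙ(X)+Hₙ(Y))/2 ≤ d₁(Hₙ(X+Y) − (Hₙ(X)+Hₙ(Y))/2) + d₂(Hₙ(X)+Hₙ(Y)−Hₙ(X,Y)) + B`. -/
theorem entropy_linear_combination (k l : ℚ) (hk : k ≠ 0) (hl : l ≠ 0) :
    ∃ (d₁ d₂ : ℕ) (B : ℝ), 0 < d₁ ∧ 0 < B ∧
      ∀ (Ω : Type) (mΩ : MeasurableSpace Ω) (P : Measure Ω),
        IsProbabilityMeasure P →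
        ∀ (X Y : Ω → ℝ), Measurable X → Measurable Y →
          ∀ c : ℝ, (∀ ω, |X ω| ≤ c ∧ |Y ω| ≤ c) →
            ∀ n : ℕ,
              Hn P n (fun ω => (k : ℝ) * X ω + (l : ℝ) * Y ω) -
                  (Hn P n X + Hn P n Y) / 2 ≤
                (d₁ : ℝ) * (Hn P n (fun ω => X ω + Y ω) - (Hn P n X + Hn P n Y) / 2) +
                  (d₂ : ℝ) * (Hn P n X + Hn P n Y - Hn2 P n X Y) + B := by
  have hk_eq := ratCast_eq_num_mul_div_den_mul k l.den_ne_zero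
  have hl_eq := ratCast_eq_num_mul_div_den_mul l k.den_ne_zero
  rw [mul_comm (l.den : ℤ)] at hl_eq
  set N : ℕ := (k.num * l.den).natAbs + (l.num * k.den).natAbs
  have hlog : 0 ≤ logb 2 (2 * N + 1) :=
    logb_nonneg one_lt_two (le_add_of_nonneg_left (by positivity))
  refine ⟨4 * N + 1, 10 * N + 4, 4 * N + 1 + logb 2 (2 * N + 1), by positivity, by positivity,
    fun Ω _ P _ X Y hX hY c hc n => ?_⟩
  have h := Hn_linear_combination_sub_le (P := P) hX hY (fun ω => (hc ω).1) (fun ω => (hc ω).2)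
    (k.num * l.den) (l.num * k.den) (q := k.den * l.den) (by simp) n
  rw [← hk_eq, ← hl_eq] at h
  exact_mod_cast h
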